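/- arXiv:2307.02904 — 3 statements merged into one kernel-verified Lean document; each statement's English description precedes it below -/
import Mathlib

section
/- Let b ≤ d and b' ≤ d' be real numbers and set η := max(|b − b'|, |d − d'|). Then the Lebesgue measure of the symmetric difference of the triangles T(b,d) and T(b',d') satisfies ω(T(b,d) Δ T(b',d')) ≤ 2(d − b)·η + 2η². -/
open MeasureTheory

/-- The triangular region `T(b,d) = {(x,y) : b ≤ x ≤ y ≤ d}` in the plane. -/
def Tri (b d : ℝ) : Set (ℝ × ℝ) := {q | b ≤ q.1 ∧ q.1 ≤ q.2 ∧ q.2 ≤ d}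

lemma Tri_closed (b d : ℝ) : IsClosed (Tri b d) := by
  unfold Tri
  exact (isClosed_le continuous_const continuous_fst).inter
    ((isClosed_le continuous_fst continuous_snd).inter
      (isClosed_le continuous_snd continuous_const))

lemma Tri_volume (b d : ℝ) (h : b ≤ d) :
    volume (Tri b d) = ENNReal.ofReal ((d - b) ^ 2 / 2) := by
  rw [Measure.volume_eq_prod, Measure.prod_apply (Tri_closed b d).measurableSet]
  have h1 : ∀ x : ℝ, volume (Prod.mk x ⁻¹' Tri b d)
      = (Set.Icc b d).indicator (fun x => ENNReal.ofReal (d - x)) x := by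
    intro x
    by_cases hx : x ∈ Set.Icc b d
    · have : Prod.mk x ⁻¹' Tri b d = Set.Icc x d := by
        ext y
        simp [Tri, hx.1]
      rw [this, Set.indicator_of_mem hx, Real.volume_Icc]
    · have : Prod.mk x ⁻¹' Tri b d = ∅ := by
        ext y
        simp only [Tri, Set.mem_preimage, Set.mem_setOf_eq, Set.mem_empty_iff_false, iff_false]
        rintro ⟨h1, h2, h3⟩
        exact hx ⟨h1, h2.trans h3⟩
      rw [this, Set.indicator_of_notMem hx, measure_empty]
  simp_rw [h1]
  rw [lintegral_indicator measurableSet_Icc, ← ofReal_integral_eq_lintegral_ofReal]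
  · congr 1
    rw [integral_Icc_eq_integral_Ioc, ← intervalIntegral.integral_of_le h,
      intervalIntegral.integral_sub (by simp) (by simp)]
    simp
    ring
  · exact (by fun_prop : Continuous fun x : ℝ => d - x).continuousOn.integrableOn_Icc
  · refine (ae_restrict_iff' measurableSet_Icc).2 (Filter.Eventually.of_forall ?_)
    intro x hx
    simpa using hx.2

lemma Tri_real (b d : ℝ) : volume.real (Tri b d) = (max 0 (d - b)) ^ 2 / 2 := by
  rcases le_total b d with h | h
  · rw [Measure.real, Tri_volume b d h, ENNReal.toReal_ofReal (by positivity),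
      max_eq_right (by linarith)]
  · rw [max_eq_left (by linarith)]
    rcases h.eq_or_lt with rfl | h
    · rw [Measure.real, Tri_volume _ _ le_rfl]; simp
    have : Tri b d = ∅ := by
      ext y
      simp only [Tri, Set.mem_setOf_eq, Set.mem_empty_iff_false, iff_false]
      rintro ⟨h1, h2, h3⟩
      linarith
    simp [this]

lemma Tri_ne_top (b d : ℝ) : volume (Tri b d) ≠ ⊤ := by
  have hs : Tri b d ⊆ Set.Icc b d ×ˢ Set.Icc b d := by
    rintro ⟨x, y⟩ ⟨h1, h2, h3⟩
    exact ⟨⟨h1, h2.trans h3⟩, ⟨h1.trans h2, h3⟩⟩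
  exact ((measure_mono hs).trans_lt (isCompact_Icc.prod isCompact_Icc).measure_lt_top).ne

lemma Tri_inter (b d b' d' : ℝ) : Tri b d ∩ Tri b' d' = Tri (max b b') (min d d') := by
  ext q
  simp only [Tri, Set.mem_inter_iff, Set.mem_setOf_eq, max_le_iff, le_min_iff]
  tauto

/-- With `η = max(|b − b'|, |d − d'|)`, the Lebesgue measure of the symmetric
difference of the triangles `T(b,d)` and `T(b',d')` is at most
`2(d − b)·η + 2η²`. -/
theorem stmt_2 (b d b' d' : ℝ) (h : b ≤ d) (h' : b' ≤ d') :
    volume (symmDiff (Tri b d) (Tri b' d'))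
      ≤ ENNReal.ofReal
          (2 * (d - b) * max |b - b'| |d - d'| + 2 * (max |b - b'| |d - d'|) ^ 2) := by
  have hA := measureReal_inter_add_diff (μ := volume) (s := Tri b d)
    (Tri_closed b' d').measurableSet (Tri_ne_top b d)
  have hB := measureReal_inter_add_diff (μ := volume) (s := Tri b' d')
    (Tri_closed b d).measurableSet (Tri_ne_top b' d')
  rw [Set.inter_comm] at hB
  rw [Tri_inter, Tri_real, Tri_real] at hA hB
  have fA : volume (Tri b d \ Tri b' d') ≠ ⊤ := measure_ne_top_of_subset Set.diff_subset (Tri_ne_top b d)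
  have fB : volume (Tri b' d' \ Tri b d) ≠ ⊤ := measure_ne_top_of_subset Set.diff_subset (Tri_ne_top b' d')
  refine (measure_union_le _ _).trans ?_
  rw [← ENNReal.ofReal_toReal fA, ← ENNReal.ofReal_toReal fB,
    ← ENNReal.ofReal_add ENNReal.toReal_nonneg ENNReal.toReal_nonneg]
  apply ENNReal.ofReal_le_ofReal
  change volume.real (Tri b d \ Tri b' d') + volume.real (Tri b' d' \ Tri b d) ≤ _
  rw [max_eq_right (sub_nonneg.2 h)] at hA
  rw [max_eq_right (sub_nonneg.2 h')] at hB
  have e1 := le_max_left |b - b'| |d - d'|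
  have e2 := le_max_right |b - b'| |d - d'|
  generalize max |b - b'| |d - d'| = η at *
  obtain ⟨e1, e1'⟩ := abs_le.1 e1
  obtain ⟨e2, e2'⟩ := abs_le.1 e2
  generalize volume.real (Tri b d \ Tri b' d') = A at *
  generalize volume.real (Tri b' d' \ Tri b d) = B at *
  have hη : 0 ≤ η := by linarith
  obtain ⟨L, rfl⟩ : ∃ L, d = b + L := ⟨d - b, by ring⟩
  obtain ⟨s, rfl⟩ : ∃ s, b' = b + s := ⟨b' - b, by ring⟩
  obtain ⟨t, rfl⟩ : ∃ t, d' = b + L + t := ⟨d' - (b + L), by ring⟩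
  have hL : 0 ≤ L := by linarith
  have hs1 : s ≤ η := by linarith
  have hs2 : -η ≤ s := by linarith
  have ht1 : t ≤ η := by linarith
  have ht2 : -η ≤ t := by linarith
  have hL' : 0 ≤ L + t - s := by linarith
  rcases le_total 0 s with hs | hs <;> rcases le_total 0 t with ht | ht
  · rw [max_eq_right (by linarith : b ≤ b + s), min_eq_left (by linarith : b + L ≤ b + L + t)] at hA hB
    rcases le_total s L with hu | hu
    · rw [max_eq_right (by linarith)] at hA hB
      nlinarith [mul_nonneg (sub_nonneg.2 hu) (sub_nonneg.2 hs1), mul_nonneg (sub_nonneg.2 hu) (sub_nonneg.2 ht1), mul_nonneg hs hη]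
    · rw [max_eq_left (by linarith)] at hA hB
      nlinarith
  · rw [max_eq_right (by linarith : b ≤ b + s), min_eq_right (by linarith : b + L + t ≤ b + L)] at hA hB
    rw [max_eq_right (by linarith)] at hA hB
    nlinarith [mul_nonneg hL (by linarith : 0 ≤ 2 * η + t - s), sq_nonneg (t - s)]
  · rw [max_eq_left (by linarith : b + s ≤ b), min_eq_left (by linarith : b + L ≤ b + L + t)] at hA hB
    rw [max_eq_right (by linarith)] at hA hB
    nlinarith [mul_nonneg hL (by linarith : 0 ≤ 2 * η - t + s), mul_nonneg (by linarith : 0 ≤ 2 * η - t + s) (by linarith : 0 ≤ 2 * η + t - s)]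
  · rw [max_eq_left (by linarith : b + s ≤ b), min_eq_right (by linarith : b + L + t ≤ b + L)] at hA hB
    rcases le_total 0 (L + t) with hu | hu
    · rw [max_eq_right (by linarith)] at hA hB
      nlinarith [mul_nonneg hu (by linarith : 0 ≤ η + t), mul_nonneg hu (by linarith : 0 ≤ η + s), mul_nonneg (neg_nonneg.2 ht) hη]
    · rw [max_eq_left (by linarith)] at hA hB
      nlinarith
end

section
/- Let m ≥ 1 and n ≥ 0 be integers. Suppose given real numbers b_i ≤ d_i and b'_i ≤ d'_i for i = 1,…,m (matched pairs of bars), and real numbers c_j ≤ e_j for j = 1,…,n (bars matched to the diagonal). Set R := max over i of (d_i − b_i) and S := Σ_{i=1}^m (|b_i − b'_i| + |d_i − d'_i|) + Σ_{j=1}^n (e_j − c_j), and assume S ≤ 1. Define the rank functions f := Σ_{i=1}^m 1_{T(b_i,d_i)} and g := Σ_{i=1}^m 1_{T(b'_i,d'_i)} + Σ_{j=1}^n 1_{T(c_j,e_j)}. Then ∫_{ℝ²} |f − g| dω ≤ (2R + 2) · S. -/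
open MeasureTheory

lemma Tri_meas (b d : ℝ) : MeasurableSet (Tri b d) := by
  have h : IsClosed (Tri b d) := by
    unfold Tri
    exact (isClosed_le continuous_const continuous_fst).inter
      ((isClosed_le continuous_fst continuous_snd).inter
        (isClosed_le continuous_snd continuous_const))
  exact h.measurableSet

lemma Tri_ind_meas (b d : ℝ) :
    Measurable ((Tri b d).indicator (fun _ => (1 : ℝ))) :=
  measurable_const.indicator (Tri_meas b d)

lemma vol_rect (a b c d : ℝ) (h : a ≤ b) :
    volume (Set.Icc a b ×ˢ Set.Icc c d : Set (ℝ × ℝ)) = ENNReal.ofReal ((b - a) * (d - c)) := by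
  rw [Measure.volume_eq_prod, Measure.prod_prod, Real.volume_Icc, Real.volume_Icc,
    ENNReal.ofReal_mul (by linarith)]

lemma pair_bound (b d b' d' L : ℝ) (hL : 0 ≤ L) (h : d - b ≤ L) (h' : d' - b' ≤ L) :
    (∫⁻ x, ENNReal.ofReal |(Tri b d).indicator (fun _ => (1 : ℝ)) x
      - (Tri b' d').indicator (fun _ => (1 : ℝ)) x|)
      ≤ ENNReal.ofReal (L * (|b - b'| + |d - d'|)) := by
  set A : Set (ℝ × ℝ) := Set.Icc (min b b') (max b b') ×ˢ Set.Icc (min b b') (min b b' + L)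
    with hA
  set B : Set (ℝ × ℝ) := Set.Icc (max d d' - L) (max d d') ×ˢ Set.Icc (min d d') (max d d')
    with hB
  have hAB : MeasurableSet (A ∪ B) :=
    (measurableSet_Icc.prod measurableSet_Icc).union (measurableSet_Icc.prod measurableSet_Icc)
  have hsub : ∀ x : ℝ × ℝ, ¬ (x ∈ Tri b d ↔ x ∈ Tri b' d') → x ∈ A ∪ B := by
    rintro ⟨x, y⟩ hx
    simp only [Tri, Set.mem_setOf_eq, hA, hB, Set.mem_union, Set.mem_prod, Set.mem_Icc] at hx ⊢
    grind
  calc _ ≤ ∫⁻ x, (A ∪ B).indicator 1 x := by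
        apply lintegral_mono
        intro x
        by_cases hx : x ∈ A ∪ B
        · simp only [Set.indicator_of_mem hx, Pi.one_apply]
          rw [ENNReal.ofReal_le_one]
          by_cases h1 : x ∈ Tri b d <;> by_cases h2 : x ∈ Tri b' d' <;> simp [h1, h2]
        · have : x ∈ Tri b d ↔ x ∈ Tri b' d' := by
            by_contra hc
            exact hx (hsub x hc)
          by_cases h1 : x ∈ Tri b d
          · simp [h1, this.1 h1]
          · simp [h1, mt this.2 h1]
    _ = volume (A ∪ B) := lintegral_indicator_one hAB
    _ ≤ volume A + volume B := measure_union_le _ _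
    _ = _ := by
        rw [hA, hB, vol_rect _ _ _ _ min_le_max, vol_rect _ _ _ _ (by linarith),
          max_sub_min_eq_abs, max_sub_min_eq_abs, ← ENNReal.ofReal_add (by simp; positivity)
            (by simp; positivity), abs_sub_comm b' b, abs_sub_comm d' d]
        congr 1
        ring

lemma single_bound (c e L : ℝ) (h : c ≤ e) (hL : e - c ≤ L) :
    (∫⁻ x, ENNReal.ofReal ((Tri c e).indicator (fun _ => (1 : ℝ)) x))
      ≤ ENNReal.ofReal (L * (e - c)) := by
  calc _ = ∫⁻ x, (Tri c e).indicator 1 x := by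
        congr 1
        ext x
        by_cases h1 : x ∈ Tri c e <;> simp [h1]
    _ = volume (Tri c e) := lintegral_indicator_one (Tri_meas c e)
    _ ≤ volume (Set.Icc c e ×ˢ Set.Icc c e : Set (ℝ × ℝ)) := by
        apply measure_mono
        rintro ⟨x, y⟩ ⟨h1, h2, h3⟩
        simp only [Set.mem_prod, Set.mem_Icc] at *
        refine ⟨⟨?_, ?_⟩, ?_, ?_⟩ <;> linarith
    _ ≤ _ := by
        rw [vol_rect _ _ _ _ h]
        apply ENNReal.ofReal_le_ofReal
        exact mul_le_mul_of_nonneg_right hL (by linarith)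

/-- 1-Wasserstein stability for rank functions, case `p = 1`: with `S ≤ 1` the
`ℓ¹` transport cost of the matching and `R` the maximum persistence of the first
barcode, the `L¹` distance between the rank functions is at most `(2R + 2)·S`. -/
theorem stmt_7 (m n : ℕ) (hm : 1 ≤ m)
    (b d b' d' : Fin m → ℝ) (c e : Fin n → ℝ)
    (hbd : ∀ i, b i ≤ d i) (hbd' : ∀ i, b' i ≤ d' i) (hce : ∀ j, c j ≤ e j)
    (R S : ℝ)
    (hR : R = Finset.univ.sup' ⟨⟨0, hm⟩, Finset.mem_univ _⟩ (fun i => d i - b i))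
    (hS : S = (∑ i, (|b i - b' i| + |d i - d' i|)) + ∑ j, (e j - c j))
    (hS1 : S ≤ 1)
    (f g : ℝ × ℝ → ℝ)
    (hf : f = fun x => ∑ i, (Tri (b i) (d i)).indicator (fun _ => (1 : ℝ)) x)
    (hg : g = fun x =>
      (∑ i, (Tri (b' i) (d' i)).indicator (fun _ => (1 : ℝ)) x)
        + ∑ j, (Tri (c j) (e j)).indicator (fun _ => (1 : ℝ)) x) :
    (∫⁻ x, ENNReal.ofReal |f x - g x|) ≤ ENNReal.ofReal ((2 * R + 2) * S) := by
  have hRi : ∀ i, d i - b i ≤ R := fun i => by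
    rw [hR]
    exact Finset.le_sup' (fun i => d i - b i) (Finset.mem_univ i)
  have hR0 : 0 ≤ R := le_trans (sub_nonneg.2 (hbd ⟨0, hm⟩)) (hRi _)
  have hP0 : ∀ i, 0 ≤ |b i - b' i| + |d i - d' i| := fun i => by positivity
  have hQ0 : ∀ j, 0 ≤ e j - c j := fun j => sub_nonneg.2 (hce j)
  have hPs : 0 ≤ ∑ i, (|b i - b' i| + |d i - d' i|) := Finset.sum_nonneg fun i _ => hP0 i
  have hQs : 0 ≤ ∑ j, (e j - c j) := Finset.sum_nonneg fun i _ => hQ0 i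
  have hP : ∀ i, |b i - b' i| + |d i - d' i| ≤ 1 := fun i => by
    have := Finset.single_le_sum (f := fun i => |b i - b' i| + |d i - d' i|)
      (fun i _ => hP0 i) (Finset.mem_univ i)
    linarith
  have hQ : ∀ j, e j - c j ≤ 1 := fun j => by
    have := Finset.single_le_sum (f := fun j => e j - c j)
      (fun i _ => hQ0 i) (Finset.mem_univ j)
    linarith
  have hd' : ∀ i, d' i - b' i ≤ R + 1 := fun i => by
    have h1 := hP i
    have h2 := hRi i
    have h3 := le_abs_self (b i - b' i)
    have h4 := neg_abs_le (d i - d' i)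
    linarith
  have hL : 0 ≤ R + 1 := by linarith
  have mP : ∀ i, Measurable fun x => ENNReal.ofReal |(Tri (b i) (d i)).indicator (fun _ => (1 : ℝ)) x
      - (Tri (b' i) (d' i)).indicator (fun _ => (1 : ℝ)) x| := fun i =>
    ENNReal.measurable_ofReal.comp
      (continuous_abs.measurable.comp ((Tri_ind_meas _ _).sub (Tri_ind_meas _ _)))
  have mQ : ∀ j, Measurable fun x =>
      ENNReal.ofReal ((Tri (c j) (e j)).indicator (fun _ => (1 : ℝ)) x) := fun j =>
    ENNReal.measurable_ofReal.comp (Tri_ind_meas _ _)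
  have hi0 : ∀ j x, 0 ≤ (Tri (c j) (e j)).indicator (fun _ => (1 : ℝ)) x := fun j x =>
    Set.indicator_nonneg (fun _ _ => zero_le_one) x
  calc (∫⁻ x, ENNReal.ofReal |f x - g x|)
      ≤ ∫⁻ x, ((∑ i, ENNReal.ofReal |(Tri (b i) (d i)).indicator (fun _ => (1 : ℝ)) x
          - (Tri (b' i) (d' i)).indicator (fun _ => (1 : ℝ)) x|)
          + ∑ j, ENNReal.ofReal ((Tri (c j) (e j)).indicator (fun _ => (1 : ℝ)) x)) := by
        apply lintegral_mono
        intro x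
        simp only
        rw [← ENNReal.ofReal_sum_of_nonneg (fun i _ => abs_nonneg _),
          ← ENNReal.ofReal_sum_of_nonneg (fun j _ => hi0 j x),
          ← ENNReal.ofReal_add (Finset.sum_nonneg fun i _ => abs_nonneg _)
            (Finset.sum_nonneg fun j _ => hi0 j x)]
        apply ENNReal.ofReal_le_ofReal
        rw [hf, hg]
        simp only
        rw [← sub_sub, ← Finset.sum_sub_distrib]
        refine (abs_sub _ _).trans (add_le_add (Finset.abs_sum_le_sum_abs _ _) ?_)
        rw [abs_of_nonneg (Finset.sum_nonneg fun j _ => hi0 j x)]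
    _ ≤ (∑ i, ENNReal.ofReal ((R + 1) * (|b i - b' i| + |d i - d' i|)))
          + ∑ j, ENNReal.ofReal ((R + 1) * (e j - c j)) := by
        rw [lintegral_add_left (Finset.measurable_sum _ fun i _ => mP i),
          lintegral_finsetSum _ (fun i _ => mP i), lintegral_finsetSum _ (fun i _ => mQ i)]
        refine add_le_add (Finset.sum_le_sum fun i _ => ?_) (Finset.sum_le_sum fun j _ => ?_)
        · exact pair_bound _ _ _ _ _ hL (by linarith [hRi i]) (hd' i)
        · exact single_bound _ _ _ (hce j) (by linarith [hQ j])
    _ = ENNReal.ofReal ((R + 1) * S) := by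
        rw [← ENNReal.ofReal_sum_of_nonneg (fun i _ => mul_nonneg hL (hP0 i)),
          ← ENNReal.ofReal_sum_of_nonneg (fun j _ => mul_nonneg hL (hQ0 j)),
          ← Finset.mul_sum, ← Finset.mul_sum,
          ← ENNReal.ofReal_add (mul_nonneg hL hPs) (mul_nonneg hL hQs), ← mul_add, ← hS]
    _ ≤ _ := by
        apply ENNReal.ofReal_le_ofReal
        apply mul_le_mul_of_nonneg_right (by linarith)
        rw [hS]
        linarith
end

section
/- Let m ≥ 1 and n ≥ 0 be integers. Suppose given real numbers b_i ≤ d_i and b'_i ≤ d'_i for i = 1,…,m (matched pairs of bars), and real numbers c_j ≤ e_j for j = 1,…,n (bars matched to the diagonal). Set R := max over i of (d_i − b_i) and S := Σ_{i=1}^m (|b_i − b'_i| + |d_i − d'_i|) + Σ_{j=1}^n (e_j − c_j), and assume S ≤ 1. Define the rank functions f := Σ_{i=1}^m 1_{T(b_i,d_i)} and g := Σ_{i=1}^m 1_{T(b'_i,d'_i)} + Σ_{j=1}^n 1_{T(c_j,e_j)}. Then (∫_{ℝ²} |f − g|² dω)^{1/2} ≤ 2 · max{(2(R+1)·m)^{1/2},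 1/√2} · S^{1/2}. -/
open MeasureTheory

/-- Cover of the symmetric difference of two triangles. -/
def DD (b d b' d' : ℝ) : Set (ℝ × ℝ) :=
  (Set.Icc (min b b') (max b b') ×ˢ Set.Icc (min b b') (max d d')) ∪
  (Set.Icc (min b b') (max d d') ×ˢ Set.Icc (min d d') (max d d'))

lemma tri_diff (b d b' d' : ℝ) (x : ℝ × ℝ) :
    ((Tri b d).indicator (fun _ => (1 : ℝ)) x - (Tri b' d').indicator (fun _ => (1 : ℝ)) x) ^ 2
      ≤ (DD b d b' d').indicator (fun _ => (1 : ℝ)) x := by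
  classical
  by_cases hD : x ∈ DD b d b' d'
  · rw [Set.indicator_of_mem hD]
    simp only [Set.indicator_apply]
    split_ifs <;> norm_num
  · rw [Set.indicator_of_notMem hD]
    have : x ∈ Tri b d ↔ x ∈ Tri b' d' := by
      simp only [DD, Set.mem_union, Set.mem_prod, Set.mem_Icc, not_or] at hD
      simp only [Tri, Set.mem_setOf_eq]
      grind
    simp only [Set.indicator_apply, this]
    simp

lemma DD_meas (b d b' d' : ℝ) : MeasurableSet (DD b d b' d') :=
  (measurableSet_Icc.prod measurableSet_Icc).union (measurableSet_Icc.prod measurableSet_Icc)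

lemma DD_compact (b d b' d' : ℝ) : IsCompact (DD b d b' d') :=
  (isCompact_Icc.prod isCompact_Icc).union (isCompact_Icc.prod isCompact_Icc)

lemma box_vol (a b c d : ℝ) (h : a ≤ b) (h' : c ≤ d) :
    volume.real (Set.Icc a b ×ˢ Set.Icc c d) = (b - a) * (d - c) := by
  rw [Measure.volume_eq_prod, measureReal_prod_prod, Real.volume_real_Icc_of_le h,
    Real.volume_real_Icc_of_le h']

lemma DD_vol (b d b' d' R : ℝ) (h : b ≤ d) (h' : b' ≤ d') (hR : d - b ≤ R)
    (h1 : |b - b'| + |d - d'| ≤ 1) :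
    volume.real (DD b d b' d') ≤ (R + 1) * (|b - b'| + |d - d'|) := by
  have hx : min b b' ≤ max d d' := (min_le_left _ _).trans (h.trans (le_max_left _ _))
  have hb : max b b' - min b b' = |b - b'| := max_sub_min_eq_abs' _ _
  have hd : max d d' - min d d' = |d - d'| := max_sub_min_eq_abs' _ _
  have hl : max d d' - min b b' ≤ R + 1 := by
    have := le_abs_self (b - b')
    have := neg_abs_le (d - d')
    have := abs_nonneg (b - b')
    have := abs_nonneg (d - d')
    rcases max_choice d d' with h | h <;> rcases min_choice b b' with h' | h' <;>
      rw [h, h'] <;> linarith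
  refine (measureReal_union_le _ _).trans ?_
  rw [box_vol _ _ _ _ min_le_max hx, box_vol _ _ _ _ hx min_le_max, hb, hd]
  nlinarith [abs_nonneg (b - b'), abs_nonneg (d - d')]

def Sq (c e : ℝ) : Set (ℝ × ℝ) := Set.Icc c e ×ˢ Set.Icc c e

lemma Sq_vol (c e c' e' : ℝ) (h : c ≤ e) (h' : c' ≤ e') :
    volume.real (Sq c e ∩ Sq c' e') ≤ (e - c) * (e' - c') := by
  have hf : ∀ u v : ℝ, volume (Sq u v) ≠ ⊤ := fun u v =>
    (isCompact_Icc.prod isCompact_Icc).measure_lt_top.ne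
  have h1 : volume.real (Sq c e ∩ Sq c' e') ≤ (e - c) * (e - c) :=
    (measureReal_mono Set.inter_subset_left (hf _ _)).trans_eq (box_vol _ _ _ _ h h)
  have h2 : volume.real (Sq c e ∩ Sq c' e') ≤ (e' - c') * (e' - c') :=
    (measureReal_mono Set.inter_subset_right (hf _ _)).trans_eq (box_vol _ _ _ _ h' h')
  rcases le_total (e - c) (e' - c') with h3 | h3
  · nlinarith
  · nlinarith

lemma tri_prod (c e c' e' : ℝ) (x : ℝ × ℝ) :
    (Tri c e).indicator (fun _ => (1 : ℝ)) x * (Tri c' e').indicator (fun _ => (1 : ℝ)) x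
      ≤ (Sq c e ∩ Sq c' e').indicator (fun _ => (1 : ℝ)) x := by
  classical
  have hs : ∀ u v : ℝ, Tri u v ⊆ Sq u v := fun u v q hq =>
    ⟨⟨hq.1, hq.2.1.trans hq.2.2⟩, ⟨hq.1.trans hq.2.1, hq.2.2⟩⟩
  by_cases h1 : x ∈ Tri c e
  · by_cases h2 : x ∈ Tri c' e'
    · rw [Set.indicator_of_mem h1, Set.indicator_of_mem h2,
        Set.indicator_of_mem (Set.mem_inter (hs _ _ h1) (hs _ _ h2))]
      norm_num
    · rw [Set.indicator_of_notMem h2, mul_zero]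
      exact Set.indicator_nonneg (fun _ _ => zero_le_one) _
  · rw [Set.indicator_of_notMem h1, zero_mul]
    exact Set.indicator_nonneg (fun _ _ => zero_le_one) _

/-- 1-Wasserstein stability for rank functions, case `p = 2`: with `S ≤ 1` the
`ℓ¹` transport cost of the matching and `R` the maximum persistence of the first
barcode, the `L²` distance between the rank functions is at most
`2 · max{(2(R+1)m)^{1/2}, 1/√2} · S^{1/2}`. -/
theorem stmt_8 (m n : ℕ) (hm : 1 ≤ m)
    (b d b' d' : Fin m → ℝ) (c e : Fin n → ℝ)
    (hbd : ∀ i, b i ≤ d i) (hbd' : ∀ i, b' i ≤ d' i) (hce : ∀ j, c j ≤ e j)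
    (R S : ℝ)
    (hR : R = Finset.univ.sup' ⟨⟨0, hm⟩, Finset.mem_univ _⟩ (fun i => d i - b i))
    (hS : S = (∑ i, (|b i - b' i| + |d i - d' i|)) + ∑ j, (e j - c j))
    (hS1 : S ≤ 1)
    (f g : ℝ × ℝ → ℝ)
    (hf : f = fun x => ∑ i, (Tri (b i) (d i)).indicator (fun _ => (1 : ℝ)) x)
    (hg : g = fun x =>
      (∑ i, (Tri (b' i) (d' i)).indicator (fun _ => (1 : ℝ)) x)
        + ∑ j, (Tri (c j) (e j)).indicator (fun _ => (1 : ℝ)) x) :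
    (∫⁻ x, ENNReal.ofReal (|f x - g x| ^ 2)) ^ ((1 : ℝ) / 2)
      ≤ ENNReal.ofReal
          (2 * max (Real.sqrt (2 * (R + 1) * m)) (1 / Real.sqrt 2) * Real.sqrt S) := by
  classical
  have hs1 : 0 ≤ ∑ i, (|b i - b' i| + |d i - d' i|) :=
    Finset.sum_nonneg fun i _ => by positivity
  have hs2 : 0 ≤ ∑ j, (e j - c j) := Finset.sum_nonneg fun j _ => sub_nonneg.2 (hce j)
  have hRi : ∀ i, d i - b i ≤ R := fun i => by
    rw [hR]; exact Finset.le_sup' (fun i => d i - b i) (Finset.mem_univ i)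
  have hR0 : 0 ≤ R := by linarith [hRi ⟨0, hm⟩, hbd ⟨0, hm⟩]
  have hm' : (1 : ℝ) ≤ m := by exact_mod_cast hm
  have hi1 : ∀ i, |b i - b' i| + |d i - d' i| ≤ 1 := fun i => by
    have := Finset.single_le_sum (f := fun i => |b i - b' i| + |d i - d' i|)
      (fun i _ => by positivity) (Finset.mem_univ i)
    linarith
  let D : Fin m → Set (ℝ × ℝ) := fun i => DD (b i) (d i) (b' i) (d' i)
  let Q : Fin n → Fin n → Set (ℝ × ℝ) := fun j k => Sq (c j) (e j) ∩ Sq (c k) (e k)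
  let h : ℝ × ℝ → ℝ := fun x => 2 * m * (∑ i, (D i).indicator (fun _ => (1 : ℝ)) x)
    + 2 * ∑ j, ∑ k, (Q j k).indicator (fun _ => (1 : ℝ)) x
  have hpt : ∀ x, |f x - g x| ^ 2 ≤ h x := by
    intro x
    rw [sq_abs, hf, hg]
    simp only [h]
    have hA : (∑ i, ((Tri (b i) (d i)).indicator (fun _ => (1 : ℝ)) x
        - (Tri (b' i) (d' i)).indicator (fun _ => (1 : ℝ)) x)) ^ 2
        ≤ m * ∑ i, (D i).indicator (fun _ => (1 : ℝ)) x := by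
      refine sq_sum_le_card_mul_sum_sq.trans ?_
      simp only [Finset.card_univ, Fintype.card_fin]
      gcongr
      exact tri_diff _ _ _ _ _
    have hB : (∑ j, (Tri (c j) (e j)).indicator (fun _ => (1 : ℝ)) x) ^ 2
        ≤ ∑ j, ∑ k, (Q j k).indicator (fun _ => (1 : ℝ)) x := by
      rw [sq, Finset.sum_mul_sum]
      exact Finset.sum_le_sum fun j _ => Finset.sum_le_sum fun k _ => tri_prod _ _ _ _ _
    rw [Finset.sum_sub_distrib] at hA
    generalize (∑ i, (Tri (b i) (d i)).indicator (fun _ => (1 : ℝ)) x) = u at *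
    generalize (∑ i, (Tri (b' i) (d' i)).indicator (fun _ => (1 : ℝ)) x) = v at *
    generalize (∑ j, (Tri (c j) (e j)).indicator (fun _ => (1 : ℝ)) x) = w at *
    nlinarith [sq_nonneg (u - v + w)]
  have hDi : ∀ i, Integrable ((D i).indicator (fun _ => (1 : ℝ))) := fun i =>
    (integrable_indicator_iff (DD_meas _ _ _ _)).2
      (integrableOn_const (DD_compact _ _ _ _).measure_lt_top.ne)
  have hSm : ∀ u v : ℝ, MeasurableSet (Sq u v) := fun u v =>
    measurableSet_Icc.prod measurableSet_Icc
  have hQm : ∀ j k, MeasurableSet (Q j k) := fun j k => (hSm _ _).inter (hSm _ _)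
  have hQi : ∀ j k, Integrable ((Q j k).indicator (fun _ => (1 : ℝ))) := fun j k =>
    (integrable_indicator_iff (hQm j k)).2
      (integrableOn_const (measure_ne_top_of_subset Set.inter_subset_left
        (isCompact_Icc.prod isCompact_Icc).measure_lt_top.ne))
  have hI1 : Integrable (fun x => 2 * m * (∑ i, (D i).indicator (fun _ => (1 : ℝ)) x)) :=
    (integrable_finset_sum _ fun i _ => hDi i).const_mul _
  have hI2 : Integrable (fun x => 2 * ∑ j, ∑ k, (Q j k).indicator (fun _ => (1 : ℝ)) x) :=
    (integrable_finset_sum _ fun j _ => integrable_finset_sum _ fun k _ => hQi j k).const_mul _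
  have hint : ∫ x, h x ≤ 8 * ((R + 1) * m) * S := by
    have e1 : ∫ x, h x = 2 * m * (∑ i, volume.real (D i))
        + 2 * ∑ j, ∑ k, volume.real (Q j k) := by
      simp only [h]
      rw [integral_add hI1 hI2, integral_const_mul, integral_const_mul,
        integral_finset_sum _ (fun i _ => hDi i),
        integral_finset_sum _ (fun j _ => integrable_finset_sum _ fun k _ => hQi j k)]
      congr 2
      · refine Finset.sum_congr rfl fun i _ => ?_
        rw [integral_indicator_const _ (DD_meas _ _ _ _)]; simp [D]
      · refine Finset.sum_congr rfl fun j _ => ?_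
        rw [integral_finset_sum _ (fun k _ => hQi j k)]
        refine Finset.sum_congr rfl fun k _ => ?_
        rw [integral_indicator_const _ (hQm j k)]; simp
    have e2 : ∑ i, volume.real (D i) ≤ (R + 1) * ∑ i, (|b i - b' i| + |d i - d' i|) := by
      rw [Finset.mul_sum]
      exact Finset.sum_le_sum fun i _ => DD_vol _ _ _ _ _ (hbd i) (hbd' i) (hRi i) (hi1 i)
    have e3 : ∑ j, ∑ k, volume.real (Q j k) ≤ (∑ j, (e j - c j)) * ∑ j, (e j - c j) := by
      rw [Finset.sum_mul_sum]
      exact Finset.sum_le_sum fun j _ => Finset.sum_le_sum fun k _ =>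
        Sq_vol _ _ _ _ (hce j) (hce k)
    rw [e1]
    generalize (∑ i, (|b i - b' i| + |d i - d' i|)) = s at *
    generalize (∑ j, (e j - c j)) = t at *
    have e4 : 2 * m * (∑ i, volume.real (D i)) ≤ 2 * m * ((R + 1) * s) := by gcongr
    have e5 : t * t ≤ t := by nlinarith
    have e6 : 1 ≤ (R + 1) * m := by nlinarith
    have e7 : t ≤ (R + 1) * m * t := le_mul_of_one_le_left hs2 e6
    have e8 : 0 ≤ (R + 1) * m * s := by positivity
    rw [hS]
    nlinarith
  have hS0 : 0 ≤ S := by linarith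
  have hle : ∫⁻ x, ENNReal.ofReal (|f x - g x| ^ 2) ≤ ENNReal.ofReal (8 * ((R + 1) * m) * S) := by
    refine (lintegral_mono fun x => ENNReal.ofReal_le_ofReal (hpt x)).trans ?_
    have hI : Integrable h := hI1.add hI2
    rw [← ofReal_integral_eq_lintegral_ofReal hI
      (Filter.Eventually.of_forall fun x => (sq_nonneg _).trans (hpt x))]
    exact ENNReal.ofReal_le_ofReal hint
  refine (ENNReal.rpow_le_rpow hle (by norm_num)).trans ?_
  rw [ENNReal.ofReal_rpow_of_nonneg (by positivity) (by norm_num)]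
  refine ENNReal.ofReal_le_ofReal ?_
  rw [← Real.sqrt_eq_rpow]
  have : Real.sqrt (8 * ((R + 1) * m) * S)
      = 2 * Real.sqrt (2 * (R + 1) * m) * Real.sqrt S := by
    rw [Real.sqrt_mul (by positivity)]
    congr 1
    rw [show 8 * ((R + 1) * (m : ℝ)) = 2 ^ 2 * (2 * (R + 1) * m) by ring,
      Real.sqrt_mul (by norm_num), Real.sqrt_sq (by norm_num)]
  rw [this]
  gcongr
  exact le_max_left _ _
end
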